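/- arXiv:1507.08503 — 3 statements merged into one kernel-verified Lean document; each statement's English description precedes it below -/
import Mathlib

section
/- Let q be a prime power and let D be a q-Steiner system S_q(t,k,n) with 1 ≤ t ≤ k ≤ n. Let E = {Z ∈ D : e_n ∈ Z}, where e_n is the standard basis vector with a one in the last coordinate. Then for every Z ∈ E the punctured subspace π_{n−1}(Z) is a (k−1)-dimensional subspace of F_q^{n−1}, the map Z ↦ π_{n−1}(Z) is injective on E, and the image set {π_{n−1}(Z) : Z ∈ E} is a q-Steiner system S_q(t−1, k−1, n−1); in particular |E| · [k−1 choose t−1]_q = [n−1 choose t−1]_q. -/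
/-!
Let `p : F^(n+1) → F^n` be the projection deleting the last coordinate. It is surjective with kernel
the line spanned by `e`, the last standard basis vector. Hence `Z ↦ p(Z)` is a bijection from the
subspaces containing `e` to all subspaces of `F^n`, with inverse `T ↦ p⁻¹(T)`; it preserves
inclusion and lowers dimensions by one. A `(t-1)`-dimensional `T` lies in `p(Z)` (with `e ∈ Z`)
exactly when the `t`-dimensional `p⁻¹(T)` lies in `Z`, so the derived design is a Steiner system.

The block count holds for every Steiner system (`IsSteiner.ncard_mul`): each `t`-dimensional
subspace lies in exactly one block, so the `t`-dimensional subspaces of `F^n` are partitioned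
according to their block. The number of `r`-dimensional subspaces of `V` is the Gaussian binomial
coefficient (`card_subspaces`), by sorting the linearly independent `r`-tuples of `V` according to
their span.
-/


/-- The Gaussian binomial coefficient `[n choose k]_q`. -/
def gaussBinom (q n k : ℕ) : ℕ :=
  (∏ i ∈ Finset.range k, (q ^ (n - i) - 1)) / ∏ i ∈ Finset.range k, (q ^ (k - i) - 1)

/-- Projection of `F^n` onto the first `m` coordinates (deleting the last `n - m`). -/
def proj (F : Type*) [Field F] (m n : ℕ) (h : m ≤ n) :
    (Fin n → F) →ₗ[F] (Fin m → F) :=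
  LinearMap.funLeft F F (Fin.castLE h)

/-- A `q`-Steiner system `S_q(t,k,n)`: a set of `k`-dimensional subspaces of `F^n`
such that every `t`-dimensional subspace is contained in exactly one of them. -/
def IsSteiner (F : Type*) [Field F] (t k n : ℕ)
    (D : Set (Submodule F (Fin n → F))) : Prop :=
  (∀ B ∈ D, Module.finrank F B = k) ∧
  ∀ T : Submodule F (Fin n → F), Module.finrank F T = t →
    ∃! B, B ∈ D ∧ T ≤ B

/-- A linearly independent `r`-tuple is the same as an `r`-dimensional subspace (its span) together
with a linearly independent `r`-tuple inside it. -/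
noncomputable def linIndepEquiv (F V : Type*) [Field F] [AddCommGroup V] [Module F V]
    [FiniteDimensional F V] (r : ℕ) :
    (Σ T : {T : Submodule F V // Module.finrank F T = r},
      {s : Fin r → T.1 // LinearIndependent F s}) ≃
    {s : Fin r → V // LinearIndependent F s} :=
  Equiv.ofBijective
    (fun x => ⟨fun i => (x.2.1 i : V), x.2.2.map' x.1.1.subtype (Submodule.ker_subtype _)⟩) <| by
    have key : ∀ (T : Submodule F V) (hT : Module.finrank F T = r) (s : Fin r → T),
        LinearIndependent F s → Submodule.span F (Set.range fun i => (s i : V)) = T := by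
      intro T hT s hs
      apply Submodule.eq_of_le_of_finrank_eq
      · rw [Submodule.span_le]
        rintro _ ⟨i, rfl⟩
        exact (s i).2
      · have h := finrank_span_eq_card (hs.map' T.subtype (Submodule.ker_subtype _))
        rw [Fintype.card_fin] at h
        exact h.trans hT.symm
    constructor
    · rintro ⟨⟨T, hT⟩, s, hs⟩ ⟨⟨T', hT'⟩, s', hs'⟩ h
      have h' : (fun i => (s i : V)) = fun i => (s' i : V) := congrArg Subtype.val h
      obtain rfl : T = T' := by rw [← key T hT s hs, ← key T' hT' s' hs', h']
      obtain rfl : s = s' := funext fun i => Subtype.ext (congrFun h' i)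
      rfl
    · rintro ⟨s, hs⟩
      refine ⟨⟨⟨Submodule.span F (Set.range s), by
        rw [finrank_span_eq_card hs, Fintype.card_fin]⟩,
        ⟨fun i => ⟨s i, Submodule.subset_span ⟨i, rfl⟩⟩, ?_⟩⟩, rfl⟩
      exact LinearIndependent.of_comp (Submodule.span F (Set.range s)).subtype hs

/-- The number of linearly independent `r`-tuples, in terms of the factors of `gaussBinom`. -/
lemma prod_pow_sub_pow (q n r : ℕ) (h : r ≤ n) :
    ∏ i : Fin r, (q ^ n - q ^ (i : ℕ)) =
      (∏ i ∈ Finset.range r, q ^ i) * ∏ i ∈ Finset.range r, (q ^ (n - i) - 1) := by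
  rw [Fin.prod_univ_eq_prod_range (fun i => q ^ n - q ^ i), ← Finset.prod_mul_distrib]
  refine Finset.prod_congr rfl fun i hi => ?_
  have : i ≤ n := (Finset.mem_range.1 hi).le.trans h
  rw [Nat.mul_sub, mul_one, ← pow_add, Nat.add_sub_cancel' this]

lemma card_subspaces (F V : Type*) [Field F] [Fintype F] [AddCommGroup V] [Module F V]
    [FiniteDimensional F V] (r : ℕ) (h : r ≤ Module.finrank F V) :
    Nat.card {T : Submodule F V // Module.finrank F T = r} =
      gaussBinom (Fintype.card F) (Module.finrank F V) r := by
  have : Finite V := Module.finite_of_finite F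
  have : Fintype V := Fintype.ofFinite V
  have : Finite (Submodule F V) := Finite.of_injective _ SetLike.coe_injective
  have : Fintype {T : Submodule F V // Module.finrank F T = r} := Fintype.ofFinite _
  have hq : 1 < Fintype.card F := Fintype.one_lt_card
  have h1 := Nat.card_congr (linIndepEquiv F V r)
  rw [card_linearIndependent h, Nat.card_sigma, Finset.sum_congr rfl (fun T _ => by
    rw [card_linearIndependent (K := F) (V := T.1) T.2.ge, T.2]), Finset.sum_const,
    Finset.card_univ, ← Nat.card_eq_fintype_card, smul_eq_mul, prod_pow_sub_pow _ _ _ h,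
    prod_pow_sub_pow _ _ _ le_rfl, mul_left_comm] at h1
  have h2 := Nat.eq_of_mul_eq_mul_left
    (Finset.prod_pos fun i _ => Nat.pow_pos (by omega)) h1
  rw [gaussBinom, ← h2, Nat.mul_div_cancel]
  refine Finset.prod_pos fun i hi => ?_
  have := Nat.one_lt_pow (Nat.sub_ne_zero_of_lt (Finset.mem_range.1 hi)) hq
  omega

/-- A `t`-dimensional subspace is the same as a block together with a `t`-dimensional subspace
of that block. -/
noncomputable def IsSteiner.equiv {F : Type*} [Field F] {t k n : ℕ}
    {D : Set (Submodule F (Fin n → F))} (hD : IsSteiner F t k n D) :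
    (Σ B : D, {T : Submodule F B.1 // Module.finrank F T = t}) ≃
      {T : Submodule F (Fin n → F) // Module.finrank F T = t} :=
  Equiv.ofBijective
    (fun x => ⟨x.2.1.map x.1.1.subtype, by
      rw [Submodule.finrank_map_subtype_eq, x.2.2]⟩) <| by
    constructor
    · rintro ⟨⟨B, hB⟩, T, hT⟩ ⟨⟨B', hB'⟩, T', hT'⟩ h
      have h' : T.map B.subtype = T'.map B'.subtype := congrArg Subtype.val h
      have hd : Module.finrank F (T.map B.subtype) = t := by
        rw [Submodule.finrank_map_subtype_eq B, hT]
      obtain rfl : B = B' := (hD.2 _ hd).unique ⟨hB, Submodule.map_subtype_le _ _⟩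
        ⟨hB', h' ▸ Submodule.map_subtype_le _ _⟩
      obtain rfl : T = T' := Submodule.map_injective_of_injective B.injective_subtype h'
      rfl
    · rintro ⟨T, hT⟩
      obtain ⟨B, ⟨hB, hTB⟩, -⟩ := hD.2 T hT
      have hm : (T.comap B.subtype).map B.subtype = T := by
        rw [Submodule.map_comap_subtype, inf_eq_right.2 hTB]
      refine ⟨⟨⟨B, hB⟩, T.comap B.subtype, ?_⟩, Subtype.ext hm⟩
      rw [← Submodule.finrank_map_subtype_eq B, hm, hT]

lemma IsSteiner.ncard_mul {F : Type*} [Field F] [Fintype F] {t k n : ℕ} (htk : t ≤ k)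
    (hkn : k ≤ n) {D : Set (Submodule F (Fin n → F))} (hD : IsSteiner F t k n D) :
    D.ncard * gaussBinom (Fintype.card F) k t = gaussBinom (Fintype.card F) n t := by
  have : Finite (Submodule F (Fin n → F)) := Finite.of_injective _ SetLike.coe_injective
  have : Fintype D := Fintype.ofFinite _
  have : ∀ B : D, Finite {T : Submodule F B.1 // Module.finrank F T = t} := fun B => by
    have : Finite (Submodule F B.1) := Finite.of_injective _ SetLike.coe_injective
    infer_instance
  have h := Nat.card_congr hD.equiv
  rw [Nat.card_sigma, card_subspaces F _ t (by simpa using htk.trans hkn),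
    Finset.sum_congr rfl (fun B _ => by
      rw [card_subspaces F B.1 t (by rw [hD.1 _ B.2]; exact htk), hD.1 _ B.2]),
    Finset.sum_const, Finset.card_univ, ← Nat.card_eq_fintype_card, smul_eq_mul,
    Module.finrank_fin_fun] at h
  exact h

section Puncture

variable {F : Type*} [Field F] {n : ℕ}

lemma ker_proj : LinearMap.ker (proj F n (n + 1) (Nat.le_succ n)) =
    Submodule.span F {Pi.single (Fin.last n) (1 : F)} := by
  ext v
  rw [LinearMap.mem_ker, Submodule.mem_span_singleton]
  constructor
  · intro h
    refine ⟨v (Fin.last n), funext fun i => ?_⟩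
    induction i using Fin.lastCases with
    | last => simp
    | cast i =>
      have : v i.castSucc = 0 := congrFun h i
      simp [this, Fin.castSucc_ne_last]
  · rintro ⟨a, rfl⟩
    funext i
    change a • (Pi.single (Fin.last n) (1 : F) : Fin (n + 1) → F) i.castSucc = 0
    simp [Fin.castSucc_ne_last]

lemma proj_surjective : Function.Surjective (proj F n (n + 1) (Nat.le_succ n)) :=
  LinearMap.funLeft_surjective_of_injective _ _ _ (Fin.castLE_injective _)

lemma comap_map_proj {Z : Submodule F (Fin (n + 1) → F)}
    (hZ : Pi.single (Fin.last n) (1 : F) ∈ Z) :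
    (Z.map (proj F n (n + 1) (Nat.le_succ n))).comap (proj F n (n + 1) (Nat.le_succ n)) = Z := by
  rw [Submodule.comap_map_eq, ker_proj, sup_eq_left, Submodule.span_singleton_le_iff_mem]
  exact hZ

lemma finrank_map_proj {Z : Submodule F (Fin (n + 1) → F)}
    (hZ : Pi.single (Fin.last n) (1 : F) ∈ Z) :
    Module.finrank F (Z.map (proj F n (n + 1) (Nat.le_succ n))) + 1 = Module.finrank F Z := by
  have hk : LinearMap.ker (proj F n (n + 1) (Nat.le_succ n)) ≤ Z := by
    rw [ker_proj, Submodule.span_singleton_le_iff_mem]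
    exact hZ
  have h := LinearMap.finrank_range_add_finrank_ker
    ((proj F n (n + 1) (Nat.le_succ n)).domRestrict Z)
  rw [LinearMap.range_domRestrict, LinearMap.ker_domRestrict,
    (Submodule.comapSubtypeEquivOfLe hk).finrank_eq, ker_proj,
    finrank_span_singleton (by simp)] at h
  exact h

lemma single_mem_comap_proj (T : Submodule F (Fin n → F)) :
    Pi.single (Fin.last n) (1 : F) ∈ T.comap (proj F n (n + 1) (Nat.le_succ n)) := by
  have h : Pi.single (Fin.last n) (1 : F) ∈ LinearMap.ker (proj F n (n + 1) (Nat.le_succ n)) := by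
    rw [ker_proj]
    exact Submodule.mem_span_singleton_self _
  rw [Submodule.mem_comap, LinearMap.mem_ker.1 h]
  exact T.zero_mem

end Puncture

theorem stmt_9 (F : Type*) [Field F] [Fintype F] (q : ℕ) (hq : Fintype.card F = q)
    (t k n : ℕ) (ht : 1 ≤ t) (htk : t ≤ k) (hkn : k ≤ n + 1)
    (D : Set (Submodule F (Fin (n + 1) → F))) (hD : IsSteiner F t k (n + 1) D) :
    (∀ Z ∈ {Z | Z ∈ D ∧ Pi.single (Fin.last n) (1 : F) ∈ Z},
        Module.finrank F (Z.map (proj F n (n + 1) (Nat.le_succ n))) = k - 1) ∧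
    Set.InjOn (fun Z => Z.map (proj F n (n + 1) (Nat.le_succ n)))
        {Z | Z ∈ D ∧ Pi.single (Fin.last n) (1 : F) ∈ Z} ∧
    IsSteiner F (t - 1) (k - 1) n
        ((fun Z => Z.map (proj F n (n + 1) (Nat.le_succ n))) ''
          {Z | Z ∈ D ∧ Pi.single (Fin.last n) (1 : F) ∈ Z}) ∧
    {Z | Z ∈ D ∧ Pi.single (Fin.last n) (1 : F) ∈ Z}.ncard *
        gaussBinom q (k - 1) (t - 1) = gaussBinom q n (t - 1) := by
  have hdim : ∀ Z ∈ {Z | Z ∈ D ∧ Pi.single (Fin.last n) (1 : F) ∈ Z},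
      Module.finrank F (Z.map (proj F n (n + 1) (Nat.le_succ n))) = k - 1 := by
    rintro Z ⟨hZ, he⟩
    have := finrank_map_proj he
    rw [hD.1 Z hZ] at this
    omega
  have hinj : Set.InjOn (fun Z => Z.map (proj F n (n + 1) (Nat.le_succ n)))
      {Z | Z ∈ D ∧ Pi.single (Fin.last n) (1 : F) ∈ Z} := by
    rintro Z ⟨-, he⟩ Z' ⟨-, he'⟩ h
    rw [← comap_map_proj he, ← comap_map_proj he']
    exact congrArg _ h
  have hst : IsSteiner F (t - 1) (k - 1) n
      ((fun Z => Z.map (proj F n (n + 1) (Nat.le_succ n))) ''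
        {Z | Z ∈ D ∧ Pi.single (Fin.last n) (1 : F) ∈ Z}) := by
    refine ⟨?_, fun T hT => ?_⟩
    · rintro _ ⟨Z, hZ, rfl⟩
      exact hdim Z hZ
    · have he := single_mem_comap_proj T
      have hmap := Submodule.map_comap_eq_of_surjective (proj_surjective (F := F) (n := n)) T
      have hfr : Module.finrank F (T.comap (proj F n (n + 1) (Nat.le_succ n))) = t := by
        rw [← finrank_map_proj he, hmap, hT]
        omega
      obtain ⟨B, ⟨hB, hTB⟩, huniq⟩ := hD.2 _ hfr
      refine ⟨_, ⟨⟨B, ⟨hB, hTB he⟩, rfl⟩, ?_⟩, ?_⟩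
      · rw [← hmap]
        exact Submodule.map_mono hTB
      · rintro _ ⟨⟨Z, ⟨hZ, heZ⟩, rfl⟩, hTZ⟩
        have : Z = B := huniq Z ⟨hZ, by
          rw [← comap_map_proj heZ]
          exact Submodule.comap_mono hTZ⟩
        rw [this]
  refine ⟨hdim, hinj, hst, ?_⟩
  subst hq
  rw [← hinj.ncard_image]
  exact hst.ncard_mul (by omega) (by omega)
end

section
/- Let q be a prime power and let D be a q-Steiner system S_q(t,k,n) with 1 < t < k < n. Then the puncturing map is injective on D: for any two distinct blocks X, Y ∈ D, the punctured subspaces satisfy π_{n−1}(X) ≠ π_{n−1}(Y). -/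
lemma finrank_ker_proj (F : Type*) [Field F] (n : ℕ) :
    Module.finrank F (proj F n (n + 1) (Nat.le_succ n)).ker = 1 := by
  have hs : Function.Surjective (proj F n (n + 1) (Nat.le_succ n)) :=
    LinearMap.funLeft_surjective_of_injective F F _ (Fin.castLE_injective _)
  have h := LinearMap.finrank_range_add_finrank_ker (proj F n (n + 1) (Nat.le_succ n))
  rw [LinearMap.range_eq_top.mpr hs, finrank_top] at h
  simp only [Module.finrank_fin_fun] at h
  omega

theorem stmt_12 (F : Type*) [Field F] [Fintype F] (t k n : ℕ)
    (ht : 1 < t) (htk : t < k) (hkn : k < n + 1)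
    (D : Set (Submodule F (Fin (n + 1) → F))) (hD : IsSteiner F t k (n + 1) D) :
    ∀ X ∈ D, ∀ Y ∈ D, X ≠ Y →
      X.map (proj F n (n + 1) (Nat.le_succ n)) ≠ Y.map (proj F n (n + 1) (Nat.le_succ n)) := by
  intro X hX Y hY hne heq
  have hsup : X ⊔ Y ≤ X ⊔ (proj F n (n + 1) (Nat.le_succ n)).ker := by
    refine sup_le le_sup_left ?_
    rw [← Submodule.comap_map_eq, heq]
    exact Submodule.le_comap_map _ _
  have h1 := Submodule.finrank_mono hsup
  have h2 := Submodule.finrank_add_le_finrank_add_finrank X (proj F n (n + 1) (Nat.le_succ n)).ker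
  have h3 := Submodule.finrank_sup_add_finrank_inf_eq X Y
  rw [finrank_ker_proj] at h2
  have hXk := hD.1 X hX
  have hYk := hD.1 Y hY
  have hinf : t ≤ Module.finrank F (X ⊓ Y : Submodule F (Fin (n + 1) → F)) := by omega
  obtain ⟨T, hT, hTt⟩ : ∃ T ≤ X ⊓ Y, Module.finrank F T = t := by
    obtain ⟨f, hf⟩ := exists_linearIndependent_of_le_finrank hinf
    refine ⟨(Submodule.span F (Set.range f)).map (X ⊓ Y).subtype, Submodule.map_subtype_le _ _, ?_⟩
    rw [Submodule.finrank_map_subtype_eq, finrank_span_eq_card hf, Fintype.card_fin]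
  exact hne ((hD.2 T hTt).unique ⟨hX, hT.trans inf_le_left⟩ ⟨hY, hT.trans inf_le_right⟩)
end

section
/- Let q be a prime power, let D be a q-Steiner system S_q(2,3,7), and let Z_1, Z_2 ∈ D be two blocks with Z_1 ∩ Z_2 = {0}. Then the number of blocks X ∈ D with X ∩ Z_1 ≠ {0} and X ∩ Z_2 ≠ {0} is exactly (q^2+q+1)^2. -/
open Module

/-- The points (one-dimensional subspaces) of the ambient space contained in the subspace `Z`. -/
def pointsOf {F V : Type*} [Field F] [AddCommGroup V] [Module F V] (Z : Submodule F V) :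
    Set (Submodule F V) :=
  {P | finrank F P = 1 ∧ P ≤ Z}

theorem ncard_pointsOf {F V : Type*} [Field F] [Finite F] [AddCommGroup V] [Module F V]
    (Z : Submodule F V) (hZ : finrank F Z = 3) :
    (pointsOf Z).ncard = Nat.card F ^ 2 + Nat.card F + 1 := by
  have h := Projectivization.card_of_finrank F Z hZ
  rw [Nat.card_congr (Projectivization.equivSubmodule F Z)] at h
  have hbij : Set.BijOn (Submodule.map Z.subtype) {H | finrank F H = 1} (pointsOf Z) := by
    refine ⟨fun H hH => ⟨?_, Submodule.map_subtype_le Z H⟩,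
      (Submodule.map_injective_of_injective Z.injective_subtype).injOn, fun P hP => ?_⟩
    · exact (Submodule.finrank_map_subtype_eq Z H).trans hH
    · have hmap : (P.comap Z.subtype).map Z.subtype = P := by
        rw [Submodule.map_comap_subtype, inf_eq_right.2 hP.2]
      refine ⟨P.comap Z.subtype, ?_, hmap⟩
      rw [Set.mem_ofPred_eq, ← Submodule.finrank_map_subtype_eq Z, hmap]
      exact hP.1
  rw [← hbij.ncard_eq]
  refine h.trans ?_
  simp [Finset.sum_range_succ]
  ring

/-- Two blocks of an `S_q(2,k,n)` that share a subspace of dimension at least two are equal. -/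
theorem IsSteiner.eq_of_two_le {F : Type*} [Field F] {k n : ℕ}
    {D : Set (Submodule F (Fin n → F))} (hD : IsSteiner F 2 k n D)
    {X Y : Submodule F (Fin n → F)} (hX : X ∈ D) (hY : Y ∈ D)
    (h : 2 ≤ finrank F (X ⊓ Y : Submodule F (Fin n → F))) : X = Y := by
  obtain ⟨f, hf⟩ := exists_linearIndependent_of_le_finrank h
  have hf' := hf.map' (X ⊓ Y).subtype (Submodule.ker_subtype _)
  have hT := finrank_span_eq_card hf'
  rw [Fintype.card_fin] at hT
  have hle : Submodule.span F (Set.range ((X ⊓ Y).subtype ∘ f)) ≤ X ⊓ Y := by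
    rw [Submodule.span_le]
    rintro _ ⟨i, rfl⟩
    exact (f i).2
  exact (hD.2 _ hT).unique ⟨hX, hle.trans inf_le_left⟩ ⟨hY, hle.trans inf_le_right⟩

theorem IsSteiner.finrank_inf_eq_one {F : Type*} [Field F] {k n : ℕ}
    {D : Set (Submodule F (Fin n → F))} (hD : IsSteiner F 2 k n D)
    {X Y : Submodule F (Fin n → F)} (hX : X ∈ D) (hY : Y ∈ D) (hne : X ≠ Y)
    (h : X ⊓ Y ≠ ⊥) : finrank F (X ⊓ Y : Submodule F (Fin n → F)) = 1 := by
  have h1 : ¬ 2 ≤ finrank F (X ⊓ Y : Submodule F (Fin n → F)) :=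
    fun h2 => hne (hD.eq_of_two_le hX hY h2)
  have h0 : finrank F (X ⊓ Y : Submodule F (Fin n → F)) ≠ 0 :=
    fun h0 => h (Submodule.finrank_eq_zero.1 h0)
  omega

theorem finrank_sup_of_points {F V : Type*} [Field F] [AddCommGroup V] [Module F V]
    [FiniteDimensional F V] {P Q : Submodule F V} (hP : finrank F P = 1)
    (hQ : finrank F Q = 1) (h : P ⊓ Q = ⊥) :
    finrank F (P ⊔ Q : Submodule F V) = 2 := by
  have := Submodule.finrank_sup_add_finrank_inf_eq P Q
  rw [h, finrank_bot, hP, hQ] at this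
  exact this

theorem stmt_17 (F : Type*) [Field F] [Fintype F] (q : ℕ) (hq : Fintype.card F = q)
    (D : Set (Submodule F (Fin 7 → F))) (hD : IsSteiner F 2 3 7 D)
    (Z₁ Z₂ : Submodule F (Fin 7 → F)) (hZ₁ : Z₁ ∈ D) (hZ₂ : Z₂ ∈ D)
    (hdisj : Z₁ ⊓ Z₂ = ⊥) :
    {X | X ∈ D ∧ X ⊓ Z₁ ≠ ⊥ ∧ X ⊓ Z₂ ≠ ⊥}.ncard = (q ^ 2 + q + 1) ^ 2 := by
  have ne₁ {X : Submodule F (Fin 7 → F)} (h : X ⊓ Z₂ ≠ ⊥) : X ≠ Z₁ := by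
    rintro rfl
    exact h hdisj
  have ne₂ {X : Submodule F (Fin 7 → F)} (h : X ⊓ Z₁ ≠ ⊥) : X ≠ Z₂ := by
    rintro rfl
    exact h ((inf_comm _ _).trans hdisj)
  have bot {P Q : Submodule F (Fin 7 → F)} (hP : P ≤ Z₁) (hQ : Q ≤ Z₂) : P ⊓ Q = ⊥ :=
    le_bot_iff.1 (hdisj ▸ inf_le_inf hP hQ)
  have ne_bot {P Y : Submodule F (Fin 7 → F)} (hP : finrank F P = 1) (hle : P ≤ Y) : Y ≠ ⊥ := by
    rintro rfl
    rw [le_bot_iff.1 hle, finrank_bot] at hP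
    exact zero_ne_one hP
  have hbij : Set.BijOn (fun X => (X ⊓ Z₁, X ⊓ Z₂))
      {X | X ∈ D ∧ X ⊓ Z₁ ≠ ⊥ ∧ X ⊓ Z₂ ≠ ⊥} (pointsOf Z₁ ×ˢ pointsOf Z₂) := by
    refine ⟨?_, ?_, ?_⟩
    · rintro X ⟨hX, h₁, h₂⟩
      exact ⟨⟨hD.finrank_inf_eq_one hX hZ₁ (ne₁ h₂) h₁, inf_le_right⟩,
        ⟨hD.finrank_inf_eq_one hX hZ₂ (ne₂ h₁) h₂, inf_le_right⟩⟩
    · rintro X ⟨hX, h₁, h₂⟩ Y ⟨hY, -, -⟩ hXY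
      obtain ⟨e₁, e₂⟩ := Prod.mk.inj hXY
      have h2 := finrank_sup_of_points (hD.finrank_inf_eq_one hX hZ₁ (ne₁ h₂) h₁)
        (hD.finrank_inf_eq_one hX hZ₂ (ne₂ h₁) h₂) (bot inf_le_right inf_le_right)
      refine (hD.2 _ h2).unique ⟨hX, sup_le inf_le_left inf_le_left⟩ ⟨hY, ?_⟩
      rw [e₁, e₂]
      exact sup_le inf_le_left inf_le_left
    · rintro ⟨P, Q⟩ ⟨⟨hP, hPZ⟩, ⟨hQ, hQZ⟩⟩
      dsimp only at hP hPZ hQ hQZ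
      obtain ⟨X, ⟨hX, hPQ⟩, -⟩ := hD.2 _ (finrank_sup_of_points hP hQ (bot hPZ hQZ))
      have hP' : P ≤ X ⊓ Z₁ := le_inf (le_sup_left.trans hPQ) hPZ
      have hQ' : Q ≤ X ⊓ Z₂ := le_inf (le_sup_right.trans hPQ) hQZ
      have h₁ := ne_bot hP hP'
      have h₂ := ne_bot hQ hQ'
      refine ⟨X, ⟨hX, h₁, h₂⟩, ?_⟩
      have e₁ := Submodule.eq_of_le_of_finrank_eq hP'
        (hP.trans (hD.finrank_inf_eq_one hX hZ₁ (ne₁ h₂) h₁).symm)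
      have e₂ := Submodule.eq_of_le_of_finrank_eq hQ'
        (hQ.trans (hD.finrank_inf_eq_one hX hZ₂ (ne₂ h₁) h₂).symm)
      exact Prod.ext e₁.symm e₂.symm
  rw [hbij.ncard_eq, Set.ncard_prod, ncard_pointsOf Z₁ (hD.1 _ hZ₁),
    ncard_pointsOf Z₂ (hD.1 _ hZ₂), Nat.card_eq_fintype_card, hq]
  ring
end
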